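/- arXiv:1011.2337 — 2 statements merged into one kernel-verified Lean document; each statement's English description precedes it below -/
import Mathlib

section
/- Let m ≥ 1 be an integer, h = 2m, let 𝔅 be the 2h×2h complex matrix given in block form by 𝔅 = [[O_h, (1/2)I_h],[(1/2)I_h, O_h]], and let J_m be the h×h skew-symmetric matrix consisting of m diagonal 2×2 blocks [[0,1],[−1,0]]. Let H = [[H₁₁, H₁₂],[H₂₁, H₂₂]] (h×h blocks) be a 2h×2h complex matrix with Hᵗ·𝔅 = −𝔅·H. Then the three conditions H₂₁ᵗ = 0, H₂₁ᵗ + J_m·H₂₂ᵗ − H₁₁ᵗ·J_m − J_m·H₁₂ᵗ·J_m = 0, and H₂₁ᵗ − J_m·H₂₂ᵗ + H₁₁ᵗ·J_m − J_m·H₁₂ᵗ·J_m = 0 hold simultaneously if and only if H₁₂ = 0, H₂₁ = 0, and J_m·H₂₂ᵗ is symmetric, i.e. J_m·H₂₂ᵗ = (J_m·H₂₂ᵗ)ᵗ. -/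
open Matrix

/-- The `2m×2m` skew-symmetric matrix `J_m` with `m` diagonal blocks `[[0,1],[-1,0]]`
(here `h = 2m`). -/
noncomputable def Jmat (m : ℕ) : Matrix (Fin 2 × Fin m) (Fin 2 × Fin m) ℂ :=
  Matrix.blockDiagonal fun _ : Fin m => !![0, 1; -1, 0]

/-- The matrix `𝔅 = [[O_h, (1/2)I_h],[(1/2)I_h, O_h]]` of the quadratic form, `h = 2m`. -/
noncomputable def Bmat (m : ℕ) :
    Matrix ((Fin 2 × Fin m) ⊕ (Fin 2 × Fin m)) ((Fin 2 × Fin m) ⊕ (Fin 2 × Fin m)) ℂ :=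
  Matrix.fromBlocks 0 ((1 / 2 : ℂ) • 1) ((1 / 2 : ℂ) • 1) 0

/-- For `H ∈ so(2h,Q)`, the three kernel conditions of `df` at the identity hold iff
`H₁₂ = 0`, `H₂₁ = 0` and `J_m·H₂₂ᵗ` is symmetric. -/
theorem ker_df_conditions (m : ℕ) (hm : 1 ≤ m)
    (H₁₁ H₁₂ H₂₁ H₂₂ : Matrix (Fin 2 × Fin m) (Fin 2 × Fin m) ℂ)
    (hso : (Matrix.fromBlocks H₁₁ H₁₂ H₂₁ H₂₂)ᵀ * Bmat m =
      -(Bmat m * Matrix.fromBlocks H₁₁ H₁₂ H₂₁ H₂₂)) :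
    (H₂₁ᵀ = 0 ∧
      H₂₁ᵀ + Jmat m * H₂₂ᵀ - H₁₁ᵀ * Jmat m - Jmat m * H₁₂ᵀ * Jmat m = 0 ∧
      H₂₁ᵀ - Jmat m * H₂₂ᵀ + H₁₁ᵀ * Jmat m - Jmat m * H₁₂ᵀ * Jmat m = 0) ↔
    (H₁₂ = 0 ∧ H₂₁ = 0 ∧ Jmat m * H₂₂ᵀ = (Jmat m * H₂₂ᵀ)ᵀ) := by
  have hJ2 : Jmat m * Jmat m = -1 := by
    unfold Jmat
    rw [← Matrix.blockDiagonal_mul, ← Matrix.blockDiagonal_one, ← Matrix.blockDiagonal_neg]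
    congr 1
    funext k
    ext i j
    fin_cases i <;> fin_cases j <;> simp
  have hJt : (Jmat m)ᵀ = -Jmat m := by
    unfold Jmat
    rw [Matrix.blockDiagonal_transpose, ← Matrix.blockDiagonal_neg]
    congr 1
    funext k
    ext i j
    fin_cases i <;> fin_cases j <;> simp
  have h11 : H₁₁ᵀ = -H₂₂ := by
    unfold Bmat at hso
    rw [Matrix.fromBlocks_transpose, Matrix.fromBlocks_multiply, Matrix.fromBlocks_multiply,
      Matrix.fromBlocks_neg, Matrix.fromBlocks_inj] at hso
    have h := hso.2.1
    simp only [Matrix.mul_zero, Matrix.zero_mul, zero_add, add_zero, Matrix.mul_smul,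
      Matrix.smul_mul, Matrix.mul_one, Matrix.one_mul, ← smul_neg] at h
    exact smul_right_injective _ (by norm_num : (1 / 2 : ℂ) ≠ 0) h
  rw [Matrix.transpose_mul, Matrix.transpose_transpose, hJt, h11, Matrix.mul_neg, Matrix.neg_mul]
  constructor
  · rintro ⟨h1, h2, h3⟩
    have h21 : H₂₁ = 0 := by simpa using h1
    rw [h1] at h2 h3
    have hs : (2 : ℂ) • (Jmat m * H₁₂ᵀ * Jmat m) = 0 := by
      rw [two_smul]
      have := congrArg₂ (fun a b => -(a + b)) h2 h3
      simp only [add_zero, neg_zero] at this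
      rw [← this]; abel
    have hz : Jmat m * H₁₂ᵀ * Jmat m = 0 := (smul_eq_zero.mp hs).resolve_left two_ne_zero
    have hz2 : H₁₂ᵀ = 0 := by
      have e : Jmat m * (Jmat m * H₁₂ᵀ * Jmat m) * Jmat m = H₁₂ᵀ := by
        rw [show Jmat m * (Jmat m * H₁₂ᵀ * Jmat m) * Jmat m
          = (Jmat m * Jmat m) * H₁₂ᵀ * (Jmat m * Jmat m) by simp only [Matrix.mul_assoc], hJ2]
        simp
      rw [← e, hz]; simp
    refine ⟨by simpa using hz2, h21, ?_⟩
    rw [hz] at h2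
    rw [← sub_eq_zero, ← h2]; abel
  · rintro ⟨h1, h2, h3⟩
    subst h1 h2
    rw [h3]
    simp
end

section
/- Let m ≥ 1 be an integer, h = 2m, let 𝔅 be the 2h×2h complex matrix given in block form by 𝔅 = [[O_h, (1/2)I_h],[(1/2)I_h, O_h]], and let J_m be the h×h skew-symmetric matrix consisting of m diagonal 2×2 blocks [[0,1],[−1,0]]. Then the complex vector space of all 2h×2h complex matrices H = [[H₁₁, H₁₂],[H₂₁, H₂₂]] (h×h blocks) satisfying Hᵗ·𝔅 = −𝔅·H together with the three linear conditions H₂₁ᵗ = 0, H₂₁ᵗ + J_m·H₂₂ᵗ − H₁₁ᵗ·J_m − J_m·H₁₂ᵗ·J_m = 0, and H₂₁ᵗ − J_m·H₂₂ᵗ + H₁₁ᵗ·J_m − J_m·H₁₂ᵗ·J_m = 0 has dimension h(h+1)/2 over ℂ. -/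
open Matrix

/-- The kernel of the differential at the identity: matrices `H ∈ so(2h,Q)` satisfying the
three linear conditions `H₂₁ᵗ = 0`, `H₂₁ᵗ + J_m H₂₂ᵗ - H₁₁ᵗ J_m - J_m H₁₂ᵗ J_m = 0` and
`H₂₁ᵗ - J_m H₂₂ᵗ + H₁₁ᵗ J_m - J_m H₁₂ᵗ J_m = 0`. -/
noncomputable def kerDf (m : ℕ) :
    Submodule ℂ (Matrix ((Fin 2 × Fin m) ⊕ (Fin 2 × Fin m))
      ((Fin 2 × Fin m) ⊕ (Fin 2 × Fin m)) ℂ) where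
  carrier := {H | Hᵀ * Bmat m = -(Bmat m * H) ∧
    (H.toBlocks₂₁)ᵀ = 0 ∧
    (H.toBlocks₂₁)ᵀ + Jmat m * (H.toBlocks₂₂)ᵀ - (H.toBlocks₁₁)ᵀ * Jmat m
      - Jmat m * (H.toBlocks₁₂)ᵀ * Jmat m = 0 ∧
    (H.toBlocks₂₁)ᵀ - Jmat m * (H.toBlocks₂₂)ᵀ + (H.toBlocks₁₁)ᵀ * Jmat m
      - Jmat m * (H.toBlocks₁₂)ᵀ * Jmat m = 0}
  zero_mem' := by
    have z11 : (0 : Matrix ((Fin 2 × Fin m) ⊕ (Fin 2 × Fin m))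
        ((Fin 2 × Fin m) ⊕ (Fin 2 × Fin m)) ℂ).toBlocks₁₁ = 0 := rfl
    have z12 : (0 : Matrix ((Fin 2 × Fin m) ⊕ (Fin 2 × Fin m))
        ((Fin 2 × Fin m) ⊕ (Fin 2 × Fin m)) ℂ).toBlocks₁₂ = 0 := rfl
    have z21 : (0 : Matrix ((Fin 2 × Fin m) ⊕ (Fin 2 × Fin m))
        ((Fin 2 × Fin m) ⊕ (Fin 2 × Fin m)) ℂ).toBlocks₂₁ = 0 := rfl
    have z22 : (0 : Matrix ((Fin 2 × Fin m) ⊕ (Fin 2 × Fin m))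
        ((Fin 2 × Fin m) ⊕ (Fin 2 × Fin m)) ℂ).toBlocks₂₂ = 0 := rfl
    refine ⟨by simp, ?_, ?_, ?_⟩ <;> simp [z11, z12, z21, z22]
  add_mem' := by
    intro a b ha hb
    obtain ⟨ha1, ha2, ha3, ha4⟩ := ha
    obtain ⟨hb1, hb2, hb3, hb4⟩ := hb
    have e11 : (a + b).toBlocks₁₁ = a.toBlocks₁₁ + b.toBlocks₁₁ := rfl
    have e12 : (a + b).toBlocks₁₂ = a.toBlocks₁₂ + b.toBlocks₁₂ := rfl
    have e21 : (a + b).toBlocks₂₁ = a.toBlocks₂₁ + b.toBlocks₂₁ := rfl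
    have e22 : (a + b).toBlocks₂₂ = a.toBlocks₂₂ + b.toBlocks₂₂ := rfl
    refine ⟨?_, ?_, ?_, ?_⟩
    · rw [transpose_add, Matrix.add_mul, ha1, hb1, Matrix.mul_add, neg_add]
    · rw [e21, transpose_add, ha2, hb2, add_zero]
    · rw [e11, e12, e21, e22, transpose_add, transpose_add, transpose_add, transpose_add,
        Matrix.mul_add, Matrix.add_mul, Matrix.mul_add, Matrix.add_mul]
      calc a.toBlocks₂₁ᵀ + b.toBlocks₂₁ᵀ + (Jmat m * a.toBlocks₂₂ᵀ + Jmat m * b.toBlocks₂₂ᵀ)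
            - (a.toBlocks₁₁ᵀ * Jmat m + b.toBlocks₁₁ᵀ * Jmat m)
            - (Jmat m * a.toBlocks₁₂ᵀ * Jmat m + Jmat m * b.toBlocks₁₂ᵀ * Jmat m)
          = (a.toBlocks₂₁ᵀ + Jmat m * a.toBlocks₂₂ᵀ - a.toBlocks₁₁ᵀ * Jmat m
              - Jmat m * a.toBlocks₁₂ᵀ * Jmat m)
            + (b.toBlocks₂₁ᵀ + Jmat m * b.toBlocks₂₂ᵀ - b.toBlocks₁₁ᵀ * Jmat m
              - Jmat m * b.toBlocks₁₂ᵀ * Jmat m) := by abel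
        _ = 0 := by rw [ha3, hb3, add_zero]
    · rw [e11, e12, e21, e22, transpose_add, transpose_add, transpose_add, transpose_add,
        Matrix.mul_add, Matrix.add_mul, Matrix.mul_add, Matrix.add_mul]
      calc a.toBlocks₂₁ᵀ + b.toBlocks₂₁ᵀ - (Jmat m * a.toBlocks₂₂ᵀ + Jmat m * b.toBlocks₂₂ᵀ)
            + (a.toBlocks₁₁ᵀ * Jmat m + b.toBlocks₁₁ᵀ * Jmat m)
            - (Jmat m * a.toBlocks₁₂ᵀ * Jmat m + Jmat m * b.toBlocks₁₂ᵀ * Jmat m)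
          = (a.toBlocks₂₁ᵀ - Jmat m * a.toBlocks₂₂ᵀ + a.toBlocks₁₁ᵀ * Jmat m
              - Jmat m * a.toBlocks₁₂ᵀ * Jmat m)
            + (b.toBlocks₂₁ᵀ - Jmat m * b.toBlocks₂₂ᵀ + b.toBlocks₁₁ᵀ * Jmat m
              - Jmat m * b.toBlocks₁₂ᵀ * Jmat m) := by abel
        _ = 0 := by rw [ha4, hb4, add_zero]
  smul_mem' := by
    intro c a ha
    obtain ⟨ha1, ha2, ha3, ha4⟩ := ha
    have e11 : (c • a).toBlocks₁₁ = c • a.toBlocks₁₁ := rfl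
    have e12 : (c • a).toBlocks₁₂ = c • a.toBlocks₁₂ := rfl
    have e21 : (c • a).toBlocks₂₁ = c • a.toBlocks₂₁ := rfl
    have e22 : (c • a).toBlocks₂₂ = c • a.toBlocks₂₂ := rfl
    refine ⟨?_, ?_, ?_, ?_⟩
    · rw [transpose_smul, Matrix.smul_mul, ha1, Matrix.mul_smul, smul_neg]
    · rw [e21, transpose_smul, ha2, smul_zero]
    · rw [e11, e12, e21, e22, transpose_smul, transpose_smul, transpose_smul, transpose_smul,
        Matrix.mul_smul, Matrix.smul_mul, Matrix.mul_smul, Matrix.smul_mul,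
        ← smul_add, ← smul_sub, ← smul_sub, ha3, smul_zero]
    · rw [e11, e12, e21, e22, transpose_smul, transpose_smul, transpose_smul, transpose_smul,
        Matrix.mul_smul, Matrix.smul_mul, Matrix.mul_smul, Matrix.smul_mul,
        ← smul_sub, ← smul_add, ← smul_sub, ha4, smul_zero]

lemma Jmat_mul_self (m : ℕ) : Jmat m * Jmat m = -1 := by
  have h : (!![0, 1; -1, 0] : Matrix (Fin 2) (Fin 2) ℂ) * !![0, 1; -1, 0] = -1 := by
    ext i j; fin_cases i <;> fin_cases j <;> simp
  unfold Jmat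
  rw [← Matrix.blockDiagonal_mul, h]
  have h2 : (fun _ : Fin m => (-1 : Matrix (Fin 2) (Fin 2) ℂ)) = -1 := rfl
  rw [h2, Matrix.blockDiagonal_neg, Matrix.blockDiagonal_one]

lemma Jmat_transpose (m : ℕ) : (Jmat m)ᵀ = -Jmat m := by
  unfold Jmat
  rw [Matrix.blockDiagonal_transpose, ← Matrix.blockDiagonal_neg]
  congr 1
  funext k
  ext i j
  fin_cases i <;> fin_cases j <;> simp

/-- The symmetric matrix attached to a function on unordered pairs. -/
def symMat {ι : Type*} (s : Sym2 ι → ℂ) : Matrix ι ι ℂ := Matrix.of fun i j => s s(i, j)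

lemma symMat_transpose {ι : Type*} (s : Sym2 ι → ℂ) : (symMat s)ᵀ = symMat s := by
  ext i j
  simp [symMat, Sym2.eq_swap]

/-- Parametrization of the kernel by symmetric matrices. -/
noncomputable def paramMap (m : ℕ) : (Sym2 (Fin 2 × Fin m) → ℂ) →ₗ[ℂ]
    Matrix ((Fin 2 × Fin m) ⊕ (Fin 2 × Fin m)) ((Fin 2 × Fin m) ⊕ (Fin 2 × Fin m)) ℂ where
  toFun s := Matrix.fromBlocks (-(Jmat m * symMat s)) 0 0 (-(symMat s * Jmat m))
  map_add' s t := by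
    have h : symMat (s + t) = symMat s + symMat t := rfl
    rw [h, Matrix.fromBlocks_add, Matrix.mul_add, Matrix.add_mul, neg_add, neg_add]
    simp
  map_smul' c s := by
    have h : symMat (c • s) = c • symMat s := rfl
    rw [h]
    simp [Matrix.fromBlocks_smul]

lemma paramMap_injective (m : ℕ) : Function.Injective (paramMap m) := by
  intro s t h
  have h1 : -(Jmat m * symMat s) = -(Jmat m * symMat t) := congrArg Matrix.toBlocks₁₁ h
  have h2 : symMat s = symMat t := by
    have h3 := congrArg (Jmat m * ·) h1
    simpa [← Matrix.mul_assoc, Jmat_mul_self] using h3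
  funext z
  induction z with
  | _ i j => exact congrFun (congrFun h2 i) j

lemma mem_kerDf_iff (m : ℕ) (A B C D : Matrix (Fin 2 × Fin m) (Fin 2 × Fin m) ℂ) :
    Matrix.fromBlocks A B C D ∈ kerDf m ↔
      C = 0 ∧ B = 0 ∧ D = -Aᵀ ∧ (Jmat m * A)ᵀ = Jmat m * A := by
  have hJ := Jmat_mul_self m
  have hT := Jmat_transpose m
  change (_ ∧ _ ∧ _ ∧ _) ↔ _
  simp only [Matrix.toBlocks_fromBlocks₁₁, Matrix.toBlocks_fromBlocks₁₂,
    Matrix.toBlocks_fromBlocks₂₁, Matrix.toBlocks_fromBlocks₂₂, Bmat,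
    Matrix.fromBlocks_transpose, Matrix.fromBlocks_multiply, Matrix.fromBlocks_neg,
    Matrix.fromBlocks_inj, Matrix.transpose_mul, hT]
  constructor
  · rintro ⟨⟨-, h1, -, -⟩, h2, h3, h4⟩
    have hC : C = 0 := by simpa using h2
    subst hC
    have hA : Aᵀ = -D := by
      have h5 := congrArg ((2 : ℂ) • ·) h1
      simpa [smul_smul] using h5
    have hD : D = -Aᵀ := by rw [hA, neg_neg]
    have hDT : Dᵀ = -A := by rw [hD]; simp
    have h5 : (2 : ℂ) • (Jmat m * Bᵀ * Jmat m) = 0 := by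
      have h6 := congrArg₂ (· + ·) h3 h4
      simp only [Matrix.transpose_zero] at h6
      have h7 : -((2 : ℂ) • (Jmat m * Bᵀ * Jmat m)) = 0 := by
        rw [two_smul, ← add_zero (0 : Matrix _ _ ℂ), ← h6]; abel
      simpa using h7
    have h6 : Jmat m * Bᵀ * Jmat m = 0 := by simpa using h5
    have hB : B = 0 := by
      have h7 : Jmat m * (Jmat m * Bᵀ * Jmat m) * Jmat m = 0 := by rw [h6]; simp
      have h8 : Jmat m * (Jmat m * Bᵀ * Jmat m) * Jmat m
          = (Jmat m * Jmat m) * Bᵀ * (Jmat m * Jmat m) := by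
        simp only [Matrix.mul_assoc]
      rw [h8, hJ] at h7
      simpa using h7
    refine ⟨rfl, hB, hD, ?_⟩
    rw [h6, hDT] at h3
    simp only [Matrix.transpose_zero, zero_add, sub_zero, Matrix.mul_neg] at h3
    rw [Matrix.mul_neg, neg_eq_iff_add_eq_zero, ← neg_eq_zero, ← h3]
    abel
  · rintro ⟨rfl, rfl, rfl, h⟩
    rw [Matrix.mul_neg] at h
    simp [← h]

lemma range_paramMap (m : ℕ) : LinearMap.range (paramMap m) = kerDf m := by
  have hJ := Jmat_mul_self m
  have hT := Jmat_transpose m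
  apply le_antisymm
  · rintro _ ⟨s, rfl⟩
    refine (mem_kerDf_iff m _ _ _ _).2 ⟨rfl, rfl, ?_, ?_⟩
    · simp [symMat_transpose, hT]
    · simp [← Matrix.mul_assoc, hJ, symMat_transpose]
  · intro H hH
    rw [← Matrix.fromBlocks_toBlocks H] at hH ⊢
    obtain ⟨hC, hB, hD, hS⟩ := (mem_kerDf_iff m _ _ _ _).1 hH
    set S := Jmat m * H.toBlocks₁₁ with hSdef
    have hsym : ∀ i j, S i j = S j i := fun i j => congrFun (congrFun hS j) i
    refine ⟨Sym2.lift ⟨fun i j => S i j, hsym⟩, ?_⟩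
    have hM : symMat (Sym2.lift ⟨fun i j => S i j, hsym⟩) = S := by
      ext i j; simp [symMat]
    change Matrix.fromBlocks (-(Jmat m * symMat _)) 0 0 (-(symMat _ * Jmat m)) = _
    rw [hM, hC, hB, hD]
    have hA : -(Jmat m * S) = H.toBlocks₁₁ := by
      rw [hSdef, ← Matrix.mul_assoc, hJ]; simp
    have hA2 : -(S * Jmat m) = -H.toBlocks₁₁ᵀ := by
      rw [← hA, Matrix.transpose_neg, Matrix.transpose_mul, hT, hS]
      simp
    rw [hA, hA2]

/-- The kernel of the differential has complex dimension `h(h+1)/2`, where `h = 2m`. -/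
theorem finrank_kerDf (m : ℕ) (hm : 1 ≤ m) :
    Module.finrank ℂ (kerDf m) = 2 * m * (2 * m + 1) / 2 := by
  have _ := hm
  rw [← range_paramMap, LinearMap.finrank_range_of_inj (paramMap_injective m),
    Module.finrank_fintype_fun_eq_card, Sym2.card, Nat.choose_two_right]
  simp [mul_comm]
end
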